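/- Let D ⊆ {−1,1}^n, f : D → {−1,1}, ε ≥ 0, and t ∈ ℕ. Suppose φ : {−1,1}^n → ℝ satisfies: (i) Σ_{x ∈ {−1,1}^n} |φ(x)| = 1; (ii) φ̂(S) = 0 for every S ⊆ [n] with |S| ≤ t; and (iii) Σ_{x ∈ D} f(x) φ(x) − Σ_{x ∉ D} |φ(x)| > 2ε. Then there is no t-tensor T ∈ ℝ^{(n+1)×⋯×(n+1)} with ‖T‖_cb ≤ 1 and |T((x,1),…,(x,1)) − f(x)| ≤ 2ε for all x ∈ D; that is, cbdeg_ε(f) > t. -/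

import Mathlib

/-!
The proof is weak LP duality. Write `p x = T((x,1),…,(x,1))`.

* Since `x_k² = 1`, every monomial of `p` is a character `∏_{k ∈ S} x_k` with `|S| ≤ t`
  (`exists_character`), so `∑ φ p = 0` (`sum_mul_evalT_eq_zero`).
* Taking `1 × 1` orthogonal matrices `U_j(i) = (x,1)_i` in the supremum defining `‖T‖_cb` gives
  `|p x| ≤ ‖T‖_cb ≤ 1` on the whole cube (`abs_evalT_le_cbNorm`). As `cbNorm` is a real `sSup`,
  this needs the set to be bounded, which holds with the bound `∑ |T_i|` (`cbNorm_bddAbove`).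

If moreover `|p - f| ≤ 2ε` on `D`, then
`∑_D f φ = ∑_D (f - p) φ - ∑_{Dᶜ} p φ ≤ 2ε ∑ |φ| + ∑_{Dᶜ} |φ| = 2ε + ∑_{Dᶜ} |φ|`,
contradicting the assumption on the objective value.
-/


open Matrix

/-- Concatenation of a tuple in `[n]^ℓ` with a tuple in `[n]^m`, viewed as a tuple in `[n]^t`
via the identity `ℓ + m = t`. -/
def tapp {n ℓ m t : ℕ} (h : ℓ + m = t) (i : Fin ℓ → Fin n) (j : Fin m → Fin n) :
    Fin t → Fin n :=
  fun q => Fin.append i j (Fin.cast h.symm q)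

/-- The ordered matrix product `U 0 (i 0) * U 1 (i 1) * ⋯ * U (t-1) (i (t-1))`. -/
def prodU {n t d : ℕ} (U : Fin t → Fin n → Matrix (Fin d) (Fin d) ℝ)
    (i : Fin t → Fin n) : Matrix (Fin d) (Fin d) ℝ :=
  (List.ofFn fun j => U j (i j)).prod

/-- The spectral (operator) norm of a real `d × d` matrix. -/
noncomputable def specNorm {d : ℕ} (A : Matrix (Fin d) (Fin d) ℝ) : ℝ :=
  ‖(Matrix.toEuclideanCLM (𝕜 := ℝ) A)‖

/-- The completely bounded norm of a `t`-tensor `T` acting on `ℝ^n`: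
`sup ‖∑_{i ∈ [n]^t} T_i U_1(i_1)⋯U_t(i_t)‖` over all `d ∈ ℕ` and orthogonal matrices
`U_j(i) ∈ O(d)`. -/
noncomputable def cbNorm (n t : ℕ) (T : (Fin t → Fin n) → ℝ) : ℝ :=
  sSup { r | ∃ d : ℕ, ∃ U : Fin t → Fin n → Matrix (Fin d) (Fin d) ℝ,
    (∀ j i, (U j i)ᵀ * U j i = 1) ∧
    r = specNorm (∑ i : Fin t → Fin n, T i • prodU U i) }

/-- The sign `±1` associated to a Boolean; `{-1,1}^n` is identified with `Fin n → Bool`. -/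
def sgn (b : Bool) : ℝ := if b then 1 else -1

/-- For `x ∈ {-1,1}^n`, the vector `z = (x, 1) ∈ ℝ^{n+1}` obtained by appending a `1`. -/
noncomputable def extOne {n : ℕ} (x : Fin n → Bool) : Fin (n + 1) → ℝ :=
  Fin.snoc (fun k => sgn (x k)) 1

/-- The evaluation `T((x,1),…,(x,1)) = ∑_{i ∈ [n+1]^t} T_i z_{i_1}⋯z_{i_t}` with `z = (x,1)`. -/
noncomputable def evalT {n t : ℕ} (T : (Fin t → Fin (n + 1)) → ℝ) (x : Fin n → Bool) : ℝ :=
  ∑ i : Fin t → Fin (n + 1), T i * ∏ j, extOne x (i j)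

/-- The Fourier coefficient `φ̂(S) = 2^{-n} ∑_{x ∈ {-1,1}^n} φ(x) ∏_{k ∈ S} x_k`. -/
noncomputable def fourierB {n : ℕ} (φ : (Fin n → Bool) → ℝ) (S : Finset (Fin n)) : ℝ :=
  (∑ x : Fin n → Bool, φ x * ∏ k ∈ S, sgn (x k)) / 2 ^ n

lemma sgn_mul_self (b : Bool) : sgn b * sgn b = 1 := by
  cases b <;> simp [sgn]

lemma extOne_mul_self {n : ℕ} (x : Fin n → Bool) (i : Fin (n + 1)) :
    extOne x i * extOne x i = 1 := by
  refine Fin.lastCases ?_ (fun k => ?_) i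
  · simp [extOne]
  · simp [extOne, sgn_mul_self]

/-- Every degree-`t` monomial in `(x,1)` is a character of the cube of degree at most `t`. -/
lemma exists_character {n : ℕ} : ∀ (t : ℕ) (i : Fin t → Fin (n + 1)),
    ∃ S : Finset (Fin n), S.card ≤ t ∧
      ∀ x : Fin n → Bool, ∏ j, extOne x (i j) = ∏ k ∈ S, sgn (x k) := by
  intro t
  induction t with
  | zero => intro i; exact ⟨∅, by simp, by simp⟩
  | succ t ih =>
    intro i
    obtain ⟨S, hS, h⟩ := ih (fun j => i j.succ)
    simp only [Fin.prod_univ_succ, h]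
    generalize i 0 = a
    induction a using Fin.lastCases with
    | last => exact ⟨S, by omega, fun x => by simp [extOne]⟩
    | cast k =>
      by_cases hk : k ∈ S
      · refine ⟨S.erase k, (Finset.card_le_card (Finset.erase_subset _ _)).trans (by omega),
          fun x => ?_⟩
        rw [← Finset.mul_prod_erase S _ hk, ← mul_assoc]
        simp [extOne, sgn_mul_self]
      · refine ⟨insert k S, by rw [Finset.card_insert_of_notMem hk]; omega, fun x => ?_⟩
        rw [Finset.prod_insert hk]
        simp [extOne]

lemma sum_mul_evalT_eq_zero {n t : ℕ} (φ : (Fin n → Bool) → ℝ)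
    (hfour : ∀ S : Finset (Fin n), S.card ≤ t → fourierB φ S = 0)
    (T : (Fin t → Fin (n + 1)) → ℝ) : ∑ x, φ x * evalT T x = 0 := by
  simp only [evalT, Finset.mul_sum]
  rw [Finset.sum_comm]
  refine Finset.sum_eq_zero fun i _ => ?_
  obtain ⟨S, hS, h⟩ := exists_character t i
  have h0 := hfour S hS
  rw [fourierB, div_eq_zero_iff, or_iff_left (by positivity)] at h0
  calc ∑ x, φ x * (T i * ∏ j, extOne x (i j))
      = T i * ∑ x, φ x * ∏ k ∈ S, sgn (x k) := by
        rw [Finset.mul_sum]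
        exact Finset.sum_congr rfl fun x _ => by rw [h]; ring
    _ = 0 := by rw [h0, mul_zero]

lemma specNorm_le_one_of_orthogonal {d : ℕ} (A : Matrix (Fin d) (Fin d) ℝ) (h : Aᵀ * A = 1) :
    specNorm A ≤ 1 := by
  have h1 : star (Matrix.toEuclideanCLM (𝕜 := ℝ) A) * Matrix.toEuclideanCLM (𝕜 := ℝ) A = 1 := by
    rw [← map_star, ← map_mul, Matrix.star_eq_conjTranspose,
      Matrix.conjTranspose_eq_transpose_of_trivial, h, map_one]
  have h2 := CStarRing.norm_star_mul_self (x := Matrix.toEuclideanCLM (𝕜 := ℝ) A)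
  rw [h1] at h2
  have h3 : ‖(1 : EuclideanSpace ℝ (Fin d) →L[ℝ] EuclideanSpace ℝ (Fin d))‖ ≤ 1 :=
    ContinuousLinearMap.norm_id_le
  unfold specNorm
  nlinarith [norm_nonneg (Matrix.toEuclideanCLM (𝕜 := ℝ) A)]

lemma prodU_orthogonal {n t d : ℕ} (U : Fin t → Fin n → Matrix (Fin d) (Fin d) ℝ)
    (hU : ∀ j i, (U j i)ᵀ * U j i = 1) (i : Fin t → Fin n) :
    (prodU U i)ᵀ * prodU U i = 1 := by
  have hmem : prodU U i ∈ Matrix.orthogonalGroup (Fin d) ℝ := by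
    refine Submonoid.list_prod_mem _ fun A hA => ?_
    obtain ⟨j, rfl⟩ := (List.mem_ofFn' _ _).1 hA
    exact (Matrix.mem_orthogonalGroup_iff' _ _).2 (hU j (i j))
  exact (Matrix.mem_orthogonalGroup_iff' _ _).1 hmem

/-- The set whose supremum is `cbNorm` is bounded above by `∑ |T_i|`. -/
lemma cbNorm_bddAbove (n t : ℕ) (T : (Fin t → Fin n) → ℝ) :
    BddAbove { r | ∃ d : ℕ, ∃ U : Fin t → Fin n → Matrix (Fin d) (Fin d) ℝ,
      (∀ j i, (U j i)ᵀ * U j i = 1) ∧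
      r = specNorm (∑ i : Fin t → Fin n, T i • prodU U i) } := by
  refine ⟨∑ i, |T i|, ?_⟩
  rintro r ⟨d, U, hU, rfl⟩
  unfold specNorm
  rw [map_sum]
  refine (norm_sum_le _ _).trans (Finset.sum_le_sum fun i _ => ?_)
  rw [map_smul, norm_smul, Real.norm_eq_abs]
  exact mul_le_of_le_one_right (abs_nonneg _)
    (specNorm_le_one_of_orthogonal _ (prodU_orthogonal U hU i))

lemma prod_ofFn_smul_one {d t : ℕ} (c : Fin t → ℝ) :
    (List.ofFn fun j => c j • (1 : Matrix (Fin d) (Fin d) ℝ)).prod = (∏ j, c j) • 1 := by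
  induction t with
  | zero => simp
  | succ t ih => simp [List.ofFn_succ, ih, Fin.prod_univ_succ, smul_smul, mul_comm]

/-- The completely bounded norm dominates the values on the cube: `1 × 1` matrices suffice. -/
lemma abs_evalT_le_cbNorm {n t : ℕ} (T : (Fin t → Fin (n + 1)) → ℝ) (x : Fin n → Bool) :
    |evalT T x| ≤ cbNorm (n + 1) t T := by
  refine le_csSup (cbNorm_bddAbove _ _ T) ⟨1, fun _ i => extOne x i • 1, fun j i => ?_, ?_⟩
  · simp [smul_smul, extOne_mul_self]
  · have h : ∑ i : Fin t → Fin (n + 1),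
        T i • prodU (d := 1) (fun _ i => extOne x i • 1) i = evalT T x • 1 := by
      simp only [prodU, prod_ofFn_smul_one, smul_smul, evalT, Finset.sum_smul]
    rw [h, specNorm, map_smul, map_one, norm_smul, norm_one, mul_one, Real.norm_eq_abs]

/-- A dual polynomial certificate: if `φ : {-1,1}^n → ℝ` has unit `ℓ₁`-norm,
vanishing Fourier coefficients up to degree `t`, and objective value
`∑_{x ∈ D} f(x)φ(x) - ∑_{x ∉ D} |φ(x)| > 2ε`, then there is no `t`-tensor `T` on `ℝ^{n+1}`
with `‖T‖_cb ≤ 1` approximating `f` on `D` up to `2ε`; that is, `cbdeg_ε(f) > t`. -/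
theorem stmt_15 (n t : ℕ) (D : Finset (Fin n → Bool)) (f : (Fin n → Bool) → ℝ)
    (hf : ∀ x ∈ D, f x = 1 ∨ f x = -1) (ε : ℝ) (hε : 0 ≤ ε)
    (φ : (Fin n → Bool) → ℝ)
    (hnorm : ∑ x : Fin n → Bool, |φ x| = 1)
    (hfour : ∀ S : Finset (Fin n), S.card ≤ t → fourierB φ S = 0)
    (hobj : 2 * ε < ∑ x ∈ D, f x * φ x - ∑ x ∈ Dᶜ, |φ x|) :
    ¬ ∃ T : (Fin t → Fin (n + 1)) → ℝ,
        cbNorm (n + 1) t T ≤ 1 ∧ ∀ x ∈ D, |evalT T x - f x| ≤ 2 * ε := by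
  rintro ⟨T, hT, happ⟩
  have hzero := sum_mul_evalT_eq_zero φ hfour T
  rw [← Finset.sum_add_sum_compl D] at hzero hnorm
  have hD : ∑ x ∈ D, f x * φ x ≤ ∑ x ∈ D, (φ x * evalT T x + 2 * ε * |φ x|) := by
    refine Finset.sum_le_sum fun x hx => ?_
    have h1 : (f x - evalT T x) * φ x ≤ 2 * ε * |φ x| := by
      refine (le_abs_self _).trans ?_
      rw [abs_mul, abs_sub_comm]
      exact mul_le_mul_of_nonneg_right (happ x hx) (abs_nonneg _)
    linarith
  have hDc : -∑ x ∈ Dᶜ, |φ x| ≤ ∑ x ∈ Dᶜ, φ x * evalT T x := by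
    rw [← Finset.sum_neg_distrib]
    refine Finset.sum_le_sum fun x _ => ?_
    refine le_trans (neg_le_neg ?_) (neg_abs_le _)
    rw [abs_mul]
    exact mul_le_of_le_one_right (abs_nonneg _) ((abs_evalT_le_cbNorm T x).trans hT)
  rw [Finset.sum_add_distrib, ← Finset.mul_sum] at hD
  have hpos : 0 ≤ ∑ x ∈ Dᶜ, |φ x| := Finset.sum_nonneg fun x _ => abs_nonneg _
  nlinarith [mul_nonneg hε hpos]
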